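/- arXiv:math/0507140 — 2 statements merged into one kernel-verified Lean document; each statement's English description precedes it below -/
import Mathlib

section
/- Ext_ℤ(ℤ[1/p], ℤ) ≅ ℤ_p / ℤ viewed as abelian groups, and Hom_ℤ(ℤ[1/p], ℤ) = 0, where ℤ[1/p] is the localization of ℤ away from p. -/
open CategoryTheory

namespace CategoryTheory.ShortComplex.ShortExact

open Limits ZeroObject

universe w v u

variable {C : Type u} [Category.{v} C] [Abelian C] {S : ShortComplex C}

/-- The objects of the two-term complex `S.X₁ ⟶ S.X₂`. -/
noncomputable def twoTermX (S : ShortComplex C) : ℕ → C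
  | 0 => S.X₂
  | 1 => S.X₁
  | _ + 2 => 0

/-- The differentials of the two-term complex `S.X₁ ⟶ S.X₂`. -/
noncomputable def twoTermD (S : ShortComplex C) : ∀ n, twoTermX S (n + 1) ⟶ twoTermX S n
  | 0 => S.f
  | _ + 1 => 0

/-- The chain complex `S.X₁ ⟶ S.X₂`, with `S.X₂` in degree `0`. -/
noncomputable def twoTerm (S : ShortComplex C) : ChainComplex C ℕ :=
  ChainComplex.of (twoTermX S) (twoTermD S) fun _ => zero_comp

lemma twoTerm_d_one_zero (S : ShortComplex C) : (twoTerm S).d 1 0 = S.f :=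
  ChainComplex.of_d (twoTermX S) (twoTermD S) 0

lemma isZero_twoTerm_X (S : ShortComplex C) (n : ℕ) : IsZero ((twoTerm S).X (n + 2)) :=
  isZero_zero C

lemma exactAt_twoTerm_succ (hS : S.ShortExact) (n : ℕ) : (twoTerm S).ExactAt (n + 1) := by
  rw [HomologicalComplex.exactAt_iff' _ (n + 1 + 1) (n + 1) n (by simp) (by simp)]
  match n with
  | 0 =>
    have := hS.mono_f
    refine (ShortComplex.exact_iff_mono _ ((isZero_twoTerm_X S 0).eq_of_src _ _)).2 ?_
    change Mono ((twoTerm S).d 1 0)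
    rwa [twoTerm_d_one_zero]
  | n + 1 => exact ShortComplex.exact_of_isZero_X₂ _ (isZero_twoTerm_X S n)

/-- A short exact sequence whose first two terms are projective is a projective resolution of
its third term. -/
noncomputable def projectiveResolution (hS : S.ShortExact) [Projective S.X₁] [Projective S.X₂] :
    ProjectiveResolution S.X₃ where
  complex := twoTerm S
  projective n := by
    match n with
    | 0 => exact inferInstanceAs (Projective S.X₂)
    | 1 => exact inferInstanceAs (Projective S.X₁)
    | n + 2 => exact (isZero_twoTerm_X S n).projective
  π := (ChainComplex.toSingle₀Equiv _ _).symm ⟨S.g, by rw [twoTerm_d_one_zero]; exact S.zero⟩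
  quasiIso := ⟨fun n => by
    cases n
    · rw [ChainComplex.quasiIsoAt₀_iff, ShortComplex.quasiIso_iff_of_zeros']
      · refine (ShortComplex.exact_and_epi_g_iff_of_iso ?_).2 ⟨hS.exact, hS.epi_g⟩
        exact ShortComplex.isoMk (Iso.refl _) (Iso.refl _) (Iso.refl _)
          (by
            simp only [Iso.refl_hom]
            exact (Category.id_comp S.f).trans
              ((Category.comp_id _).trans (twoTerm_d_one_zero S)).symm)
          (by
            simp only [Iso.refl_hom]
            refine (Category.id_comp S.g).trans (Eq.symm ((Category.comp_id _).trans ?_))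
            exact ChainComplex.toSingle₀Equiv_symm_apply_f_zero (C := twoTerm S) S.g _)
      all_goals rfl
    · rw [quasiIsoAt_iff_exactAt']
      · exact exactAt_twoTerm_succ hS _
      · apply ChainComplex.exactAt_succ_single_obj⟩

variable {R : Type w} [Ring R] [Linear R C] [EnoughProjectives C]

/-- If `0 → S.X₁ → S.X₂ → S.X₃ → 0` is exact with `S.X₁` and `S.X₂` projective, then
`Ext¹(S.X₃, Y)` is the cokernel of `Hom(S.X₂, Y) → Hom(S.X₁, Y)`. -/
theorem nonempty_ext_one_linearEquiv (hS : S.ShortExact) [Projective S.X₁] [Projective S.X₂]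
    (Y : C) {A : Type v} [AddCommGroup A] [Module R A] (φ : (S.X₁ ⟶ Y) →ₗ[R] A)
    (hφ : Function.Surjective φ) (hker : ∀ u, φ u = 0 ↔ ∃ v : S.X₂ ⟶ Y, S.f ≫ v = u) :
    Nonempty (((Ext R C 1).obj (Opposite.op S.X₃)).obj Y ≃ₗ[R] A) := by
  let K := (projectiveResolution hS).complex.linearYonedaObj R Y
  let T := K.sc' 0 1 2
  have hg : T.g = 0 := by
    ext (u : _ ⟶ _)
    exact (isZero_twoTerm_X S 0).eq_of_src _ _
  have hK (v : S.X₂ ⟶ Y) : T.f v = S.f ≫ v := by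
    change (twoTerm S).d 1 0 ≫ v = _
    rw [twoTerm_d_one_zero]
    rfl
  let U : ShortComplex (ModuleCat R) := ShortComplex.mk T.f (ModuleCat.ofHom φ) (by
    exact ModuleCat.hom_ext (LinearMap.ext fun v => (hker _).2 ⟨v, (hK v).symm⟩))
  have hU : U.Exact := by
    rw [ShortComplex.moduleCat_exact_iff]
    intro u hu
    obtain ⟨v, hv⟩ := (hker u).1 hu
    exact ⟨v, (hK v).trans hv⟩
  have : Epi U.g := (ModuleCat.epi_iff_surjective _).2 hφ
  let e := ShortComplex.LeftHomologyData.ofIsColimitCokernelCofork T hg _ hU.gIsCokernel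
  exact ⟨((projectiveResolution hS).isoExt 1 Y ≪≫
    ShortComplex.homologyMapIso (K.isoSc' 0 1 2 (by simp) (by simp)) ≪≫
    e.homologyIso).toLinearEquiv⟩

end CategoryTheory.ShortComplex.ShortExact

namespace PadicInt

variable {p : ℕ} [Fact p.Prime]

lemma summable_intCast_mul_pow (b : ℕ → ℤ) :
    Summable fun n => (b n : ℤ_[p]) * (p : ℤ_[p]) ^ n := by
  refine Summable.of_norm_bounded (g := fun n => ‖(p : ℤ_[p])‖ ^ n)
    (summable_geometric_of_lt_one (norm_nonneg _) (norm_lt_one_iff_dvd _ |>.2 dvd_rfl)) fun n => ?_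
  rw [norm_mul, norm_pow]
  exact mul_le_of_le_one_left (by positivity) (norm_le_one _)

/-- The `p`-adic integer `∑ bₙ pⁿ` attached to a sequence of integers `b`. -/
noncomputable def ofDigits (p : ℕ) [Fact p.Prime] : (ℕ → ℤ) →+ ℤ_[p] where
  toFun b := ∑' n, (b n : ℤ_[p]) * (p : ℤ_[p]) ^ n
  map_zero' := by simp
  map_add' b c := by
    simp only [Pi.add_apply, Int.cast_add, add_mul]
    exact (summable_intCast_mul_pow b).tsum_add (summable_intCast_mul_pow c)

lemma ofDigits_eq_add (b : ℕ → ℤ) :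
    ofDigits p b = b 0 + p * ofDigits p fun n => b (n + 1) := by
  change ∑' n, (b n : ℤ_[p]) * (p : ℤ_[p]) ^ n =
    b 0 + p * ∑' n, (b (n + 1) : ℤ_[p]) * (p : ℤ_[p]) ^ n
  rw [(summable_intCast_mul_pow b).tsum_eq_zero_add, ← (summable_intCast_mul_pow _).tsum_mul_left]
  simp only [pow_zero, mul_one, pow_succ', mul_left_comm]

lemma ofDigits_eq_of_recurrence {b : ℕ → ℤ} {x : ℕ → ℤ_[p]}
    (h : ∀ n, x n = b n + p * x (n + 1)) : ofDigits p b = x 0 := by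
  have key (n : ℕ) : ∀ (b : ℕ → ℤ) (x : ℕ → ℤ_[p]), (∀ n, x n = b n + p * x (n + 1)) →
      (p : ℤ_[p]) ^ n ∣ ofDigits p b - x 0 := by
    induction n with
    | zero => simp
    | succ n ih =>
      intro b x h
      rw [ofDigits_eq_add, h, add_sub_add_left_eq_sub, ← mul_sub, pow_succ']
      exact mul_dvd_mul_left _ (ih (fun n => b (n + 1)) (fun n => x (n + 1)) fun n => h _)
  refine ext_of_toZModPow.1 fun n => ?_
  rw [← sub_eq_zero, ← map_sub, ← RingHom.mem_ker, ker_toZModPow, Ideal.mem_span_singleton]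
  exact key n b x h

lemma ofDigits_surjective : Function.Surjective (ofDigits p) := by
  intro x
  have (y : ℤ_[p]) : ∃ z : ℤ_[p], y = (y.zmodRepr : ℤ) + p * z := by
    obtain ⟨z, hz⟩ := Ideal.mem_span_singleton.1
      (maximalIdeal_eq_span_p (p := p) ▸ sub_zmodRepr_mem y)
    exact ⟨z, by simp [← hz]⟩
  choose next hnext using this
  let y : ℕ → ℤ_[p] := fun n => next^[n] x
  refine ⟨fun n => (y n).zmodRepr, ofDigits_eq_of_recurrence (x := y) fun n => ?_⟩
  simp only [y, Function.iterate_succ_apply']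
  exact hnext _

/-- `∑ bₙ pⁿ` is an integer exactly when `b` is of the form `n ↦ p aₙ₊₁ - aₙ`. -/
lemma ofDigits_mem_zmultiples_iff (b : ℕ → ℤ) :
    ofDigits p b ∈ AddSubgroup.zmultiples (1 : ℤ_[p]) ↔
      ∃ a : ℕ → ℤ, ∀ n, p * a (n + 1) - a n = b n := by
  constructor
  · rintro h
    have step (c : ℕ → ℤ) (m : ℤ) (hm : (m : ℤ_[p]) + ofDigits p c = 0) :
        ∃ m' : ℤ, p * m' = m + c 0 ∧ (m' : ℤ_[p]) + ofDigits p (fun n => c (n + 1)) = 0 := by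
      rw [ofDigits_eq_add, ← add_assoc] at hm
      have hdvd : (p : ℤ) ∣ m + c 0 := by
        rw [← norm_int_lt_one_iff_dvd, ← mem_nonunits, ← IsLocalRing.mem_maximalIdeal,
          maximalIdeal_eq_span_p, Ideal.mem_span_singleton]
        exact ⟨-ofDigits p (fun n => c (n + 1)), by push_cast; linear_combination hm⟩
      obtain ⟨m', hm'⟩ := hdvd
      refine ⟨m', hm'.symm, mul_left_cancel₀ (prime_p (p := p)).ne_zero ?_⟩
      have : (m : ℤ_[p]) + c 0 = p * m' := by exact_mod_cast congrArg (Int.cast (R := ℤ_[p])) hm'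
      linear_combination hm - this
    obtain ⟨m, hm⟩ := h
    let Q (n : ℕ) := {m : ℤ // (m : ℤ_[p]) + ofDigits p (fun k => b (k + n)) = 0}
    have step' (n : ℕ) (m : Q n) : ∃ m' : Q (n + 1), p * m'.1 = m.1 + b n := by
      obtain ⟨m', h, h'⟩ := step _ _ m.2
      refine ⟨⟨m', ?_⟩, by simpa using h⟩
      simpa only [add_assoc, add_comm 1 n] using h'
    choose next hnext using step'
    let a (n : ℕ) : Q n := Nat.rec ⟨-m, by simp [← hm]⟩ next n
    exact ⟨fun n => (a n).1, fun n => by rw [sub_eq_iff_eq_add']; exact hnext n (a n)⟩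
  · rintro ⟨a, ha⟩
    refine ⟨-a 0, ?_⟩
    have := ofDigits_eq_of_recurrence (p := p) (b := b) (x := fun n => -(a n : ℤ_[p])) fun n => by
      rw [← ha]; push_cast; ring
    simp [this]

end PadicInt

theorem Localization.Away.addMonoidHom_int_eq_zero {p : ℕ} (hp : p.Prime)
    (f : Localization.Away (p : ℤ) →+ ℤ) : f = 0 := by
  ext x
  have hdvd (n : ℕ) : ((p ^ n : ℕ) : ℤ) ∣ f x := by
    have h := IsLocalization.Away.algebraMap_isUnit (S := Localization.Away (p : ℤ)) (p : ℤ)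
    obtain ⟨y, hy⟩ := (h.pow n).dvd (a := x)
    have hy' : x = (p ^ n) • y := by simpa [nsmul_eq_mul] using hy
    exact ⟨f y, by rw [hy', map_nsmul, nsmul_eq_mul]⟩
  refine Int.eq_zero_of_dvd_of_natAbs_lt_natAbs (hdvd (f x).natAbs) ?_
  rw [Int.natAbs_natCast]
  exact Nat.lt_pow_self hp.one_lt

open Polynomial

namespace Localization

variable {R : Type*} [CommRing R]

/-- The quotient map `R[X] → R[1/r]` sending `X` to `1/r`, as a linear map. -/
noncomputable def awayOfPolynomial (r : R) : R[X] →ₗ[R] Localization.Away r :=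
  ((awayEquivAdjoin r).symm.toAlgHom.comp (AdjoinRoot.mkₐ (C r * X - 1))).toLinearMap

lemma awayOfPolynomial_surjective (r : R) : Function.Surjective (awayOfPolynomial r) :=
  (awayEquivAdjoin r).symm.surjective.comp AdjoinRoot.mk_surjective

lemma awayOfPolynomial_eq_zero_iff (r : R) (q : R[X]) :
    awayOfPolynomial r q = 0 ↔ C r * X - 1 ∣ q :=
  ((awayEquivAdjoin r).symm.map_eq_zero_iff).trans AdjoinRoot.mk_eq_zero

/-- The sequence `0 → R[X] → R[X] → R[1/r] → 0` whose first map is multiplication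
by `r X - 1`. -/
noncomputable abbrev awayShortComplex {R : Type} [CommRing R] (r : R) :
    ShortComplex (ModuleCat R) :=
  ModuleCat.shortComplexOfCompEqZero (LinearMap.mulLeft R (C r * X - 1)) (awayOfPolynomial r)
    (LinearMap.ext fun q => (awayOfPolynomial_eq_zero_iff r _).2 (dvd_mul_right _ q))

lemma awayShortComplex_shortExact {R : Type} [CommRing R] [IsDomain R] (r : R) :
    (awayShortComplex r).ShortExact := by
  have hne : C r * X - 1 ≠ 0 := fun h => by simpa using congrArg (eval 0) h
  refine ModuleCat.shortComplex_shortExact _ (fun q => ?_)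
    (fun _ _ h => mul_left_cancel₀ hne h) (awayOfPolynomial_surjective r)
  exact (awayOfPolynomial_eq_zero_iff r q).trans (exists_congr fun _ => eq_comm)

end Localization

/-- A linear functional on `ℤ[X]` with values `bₙ` on `Xⁿ` is sent to the class of `∑ bₙ pⁿ`
modulo the integers. -/
noncomputable def PadicInt.quotientOfFunctional (p : ℕ) [Fact p.Prime] :
    (ModuleCat.of ℤ ℤ[X] ⟶ ModuleCat.of ℤ ℤ) →ₗ[ℤ]
      ℤ_[p] ⧸ AddSubgroup.zmultiples (1 : ℤ_[p]) :=
  (((QuotientAddGroup.mk' (AddSubgroup.zmultiples (1 : ℤ_[p]))).comp (ofDigits p)).comp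
    (AddMonoidHom.mk' (fun u n => u.hom (X ^ n)) fun _ _ => rfl)).toIntLinearMap

lemma ModuleCat.exists_hom_polynomial_int (b : ℕ → ℤ) :
    ∃ u : ModuleCat.of ℤ ℤ[X] ⟶ ModuleCat.of ℤ ℤ, ∀ n, u.hom (X ^ n) = b n :=
  ⟨ModuleCat.ofHom ((basisMonomials ℤ).constr ℤ b), fun n => by
    simpa [X_pow_eq_monomial] using (basisMonomials ℤ).constr_basis ℤ b n⟩

lemma PadicInt.quotientOfFunctional_surjective (p : ℕ) [Fact p.Prime] :
    Function.Surjective (quotientOfFunctional p) := by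
  intro y
  obtain ⟨x, rfl⟩ := QuotientAddGroup.mk_surjective y
  obtain ⟨b, rfl⟩ := ofDigits_surjective x
  obtain ⟨u, hu⟩ := ModuleCat.exists_hom_polynomial_int b
  exact ⟨u, congrArg
    (fun c => QuotientAddGroup.mk' (AddSubgroup.zmultiples (1 : ℤ_[p])) (ofDigits p c))
    (_root_.funext hu)⟩

lemma PadicInt.quotientOfFunctional_eq_zero_iff (p : ℕ) [Fact p.Prime]
    (u : ModuleCat.of ℤ ℤ[X] ⟶ ModuleCat.of ℤ ℤ) :
    quotientOfFunctional p u = 0 ↔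
      ∃ v : ModuleCat.of ℤ ℤ[X] ⟶ ModuleCat.of ℤ ℤ,
        (Localization.awayShortComplex (p : ℤ)).f ≫ v = u := by
  refine ((QuotientAddGroup.eq_zero_iff _).trans
    (ofDigits_mem_zmultiples_iff fun n => u.hom (X ^ n))).trans ?_
  have hmul (v : ModuleCat.of ℤ ℤ[X] ⟶ ModuleCat.of ℤ ℤ) (n : ℕ) :
      v.hom ((C (p : ℤ) * X - 1) * X ^ n) = p * v.hom (X ^ (n + 1)) - v.hom (X ^ n) := by
    rw [sub_mul, one_mul, mul_assoc, ← pow_succ', ← smul_eq_C_mul, map_sub, map_smul, smul_eq_mul]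
  constructor
  · rintro ⟨a, ha⟩
    obtain ⟨v, hv⟩ := ModuleCat.exists_hom_polynomial_int a
    refine ⟨v, ModuleCat.hom_ext ((basisMonomials ℤ).ext fun n => ?_)⟩
    simp only [coe_basisMonomials, ← X_pow_eq_monomial]
    refine (hmul v n).trans ?_
    rw [hv, hv, ha]
  · rintro ⟨v, rfl⟩
    exact ⟨fun n => v.hom (X ^ n), fun n => (hmul v n).symm⟩

/-- `Ext¹_ℤ(ℤ[1/p], ℤ) ≅ ℤ_p / ℤ` as abelian groups, and `Hom_ℤ(ℤ[1/p], ℤ) = 0`,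
where `ℤ[1/p] = Localization.Away (p : ℤ)` and `ℤ` sits in `ℤ_p` as the multiples
of `1`. -/
theorem stmt_4 (p : ℕ) [Fact p.Prime] :
    Nonempty
      ((((Ext ℤ (ModuleCat ℤ) 1).obj
          (Opposite.op (ModuleCat.of ℤ (Localization.Away (p : ℤ))))).obj
            (ModuleCat.of ℤ ℤ)) ≃+
        (ℤ_[p] ⧸ AddSubgroup.zmultiples (1 : ℤ_[p]))) ∧
    ∀ f : (Localization.Away (p : ℤ)) →+ ℤ, f = 0 := by
  refine ⟨?_, fun f => Localization.Away.addMonoidHom_int_eq_zero Fact.out f⟩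
  have : Projective (ModuleCat.of ℤ ℤ[X]) := (IsProjective.iff_projective _).1 inferInstance
  obtain ⟨e⟩ := (Localization.awayShortComplex_shortExact (p : ℤ)).nonempty_ext_one_linearEquiv
    (ModuleCat.of ℤ ℤ) (PadicInt.quotientOfFunctional p)
    (PadicInt.quotientOfFunctional_surjective p) (PadicInt.quotientOfFunctional_eq_zero_iff p)
  have h : ModuleCat.of ℤ (Localization.Away (p : ℤ)) =
      (Localization.awayShortComplex (p : ℤ)).X₃ := by
    unfold Localization.awayShortComplex ModuleCat.shortComplexOfCompEqZero
    congr 1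
    exact Subsingleton.elim _ _
  rw [h]
  exact ⟨e.toAddEquiv⟩
end

section
/- Every p-torsion abelian group A with {a ∈ A : p·a = 0} finite decomposes as A ≅ D ⊕ F where D is a divisible group (a finite direct sum of Prüfer p-groups) and F is a finite p-group. -/
/-- The Prüfer `p`-group, realized as the `p`-primary torsion subgroup of `ℚ/ℤ`. -/
noncomputable def Prufer (p : ℕ) [Fact p.Prime] : AddSubgroup (ℚ ⧸ AddSubgroup.zmultiples (1 : ℚ)) :=
  AddCommGroup.primaryComponent _ p

theorem exists_forall_mem_of_antitone_of_finite {α : Type*} {S : ℕ → Set α} (hS : Antitone S)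
    (hfin : (S 0).Finite) (hne : ∀ n, (S n).Nonempty) : ∃ b, ∀ n, b ∈ S n := by
  by_contra! h
  choose f hf using h
  obtain ⟨N, hN⟩ := (hfin.image f).bddAbove
  obtain ⟨b, hb⟩ := hne N
  exact hf b (hS (hN (Set.mem_image_of_mem f (hS (Nat.zero_le N) hb))) hb)

section Torsion

variable {p : ℕ} {A : Type*} [AddCommGroup A]

/-- The fibres of multiplication by `n` are finite if its kernel is. -/
theorem finite_setOf_nsmul_eq {n : ℕ} (h : {a : A | n • a = 0}.Finite) (c : A) :
    {a : A | n • a = c}.Finite := by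
  rcases Set.eq_empty_or_nonempty {a : A | n • a = c} with h0 | ⟨b, hb⟩
  · simp [h0]
  · refine (h.image (· + b)).subset fun a ha ↦ ⟨a - b, ?_, sub_add_cancel a b⟩
    simp only [Set.mem_ofPred_eq] at ha hb ⊢
    rw [nsmul_sub, ha, hb, sub_self]

theorem finite_setOf_pow_nsmul_eq_zero (h : {a : A | p • a = 0}.Finite) (n : ℕ) :
    {a : A | p ^ n • a = 0}.Finite := by
  induction n with
  | zero => simp
  | succ n ih =>
    have : {a : A | p ^ (n + 1) • a = 0} = (p • ·) ⁻¹' {a : A | p ^ n • a = 0} := by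
      ext a
      simp [pow_succ, mul_smul]
    rw [this]
    exact ih.preimage' fun c _ ↦ finite_setOf_nsmul_eq h c

theorem exists_pow_nsmul_ne_zero_and_nsmul_eq_zero {a : A} (htor : ∃ n : ℕ, p ^ n • a = 0)
    (ha : a ≠ 0) : ∃ j : ℕ, p ^ j • a ≠ 0 ∧ p • p ^ j • a = 0 := by
  classical
  have hpos : Nat.find htor ≠ 0 := fun h0 ↦ ha (by simpa [h0] using Nat.find_spec htor)
  obtain ⟨j, hj⟩ := Nat.exists_eq_succ_of_ne_zero hpos
  refine ⟨j, Nat.find_min htor (by omega), ?_⟩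
  have := Nat.find_spec htor
  rwa [hj, pow_succ', mul_smul] at this

/-- A homomorphism from a `p`-torsion group is injective if it is so on the `p`-torsion. -/
theorem injective_of_nsmul_eq_zero {B : Type*} [AddCommGroup B]
    (htor : ∀ a : A, ∃ n : ℕ, p ^ n • a = 0) (f : A →+ B)
    (hf : ∀ a, p • a = 0 → f a = 0 → a = 0) : Function.Injective f := by
  rw [injective_iff_map_eq_zero]
  intro a ha
  by_contra h0
  obtain ⟨j, hj, hj'⟩ := exists_pow_nsmul_ne_zero_and_nsmul_eq_zero (htor a) h0
  exact hj (hf _ hj' (by rw [map_nsmul, ha, smul_zero]))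

theorem exists_nsmul_eq_of_coprime {k m : ℕ} (hkm : m.Coprime k) {a : A} (ha : k • a = 0) :
    ∃ b, m • b = a := by
  refine ⟨m.gcdA k • a, ?_⟩
  have h := Nat.gcd_eq_gcd_ab m k
  rw [hkm.gcd_eq_one] at h
  have h2 := congrArg (· • a) h
  simp only [add_smul, mul_smul, natCast_zsmul, Nat.cast_one, one_smul] at h2
  rw [smul_comm k, ha, smul_zero, add_zero] at h2
  exact h2.symm

/-- A `p`-divisible `p`-torsion group is an injective `ℤ`-module. -/
theorem baer_of_torsion_of_nsmul_surjective (hp : p.Prime)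
    (htor : ∀ a : A, ∃ n : ℕ, p ^ n • a = 0) (hdiv : ∀ a : A, ∃ b, p • b = a) :
    Module.Baer ℤ A := by
  have hpow : ∀ (k : ℕ) (a : A), ∃ b, p ^ k • b = a := by
    intro k
    induction k with
    | zero => exact fun a ↦ ⟨a, by simp⟩
    | succ k ih =>
      intro a
      obtain ⟨b, rfl⟩ := ih a
      obtain ⟨c, rfl⟩ := hdiv b
      exact ⟨c, by rw [pow_succ, mul_smul]⟩
  have hsurj : ∀ {n : ℕ}, n ≠ 0 → Function.Surjective fun a : A ↦ n • a := by
    intro n hn a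
    obtain ⟨k, m, hm, rfl⟩ := Nat.exists_eq_pow_mul_and_not_dvd hn p hp.ne_one
    obtain ⟨b, rfl⟩ := hpow k a
    obtain ⟨j, hj⟩ := htor b
    obtain ⟨c, rfl⟩ :=
      exists_nsmul_eq_of_coprime (((hp.coprime_iff_not_dvd.2 hm).symm).pow_right j) hj
    exact ⟨c, mul_smul _ _ _⟩
  let _ := divisibleByOfSMulRightSurj A ℕ hsurj
  let _ := AddGroup.divisibleByIntOfDivisibleByNat A
  exact Module.Baer.of_divisible A

variable (p A) in
/-- The subgroup of elements divisible by every power of `p`. -/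
def infinitelyDivisible : AddSubgroup A :=
  ⨅ n : ℕ, (nsmulAddMonoidHom (α := A) (p ^ n)).range

theorem mem_infinitelyDivisible {a : A} :
    a ∈ infinitelyDivisible p A ↔ ∀ n : ℕ, ∃ b, p ^ n • b = a := by
  simp [infinitelyDivisible, AddSubgroup.mem_iInf]

theorem exists_pow_nsmul_eq_of_le {m n : ℕ} (hmn : m ≤ n) {a : A} (h : ∃ b, p ^ n • b = a) :
    ∃ b, p ^ m • b = a := by
  obtain ⟨b, rfl⟩ := h
  exact ⟨p ^ (n - m) • b, by rw [← mul_smul, ← pow_add, Nat.add_sub_cancel' hmn]⟩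

theorem exists_nsmul_eq_infinitelyDivisible (hfin : {a : A | p • a = 0}.Finite)
    (a : infinitelyDivisible p A) : ∃ b, p • b = a := by
  obtain ⟨b, hb⟩ := exists_forall_mem_of_antitone_of_finite
    (S := fun n ↦ {b : A | p • b = a ∧ ∃ c, p ^ n • c = b})
    (fun _ _ h _ hb ↦ ⟨hb.1, exists_pow_nsmul_eq_of_le h hb.2⟩)
    ((finite_setOf_nsmul_eq hfin a).subset fun _ hb ↦ hb.1) (by
      intro n
      obtain ⟨c, hc⟩ := mem_infinitelyDivisible.1 a.2 (n + 1)
      exact ⟨p ^ n • c, by rw [← hc, pow_succ', mul_smul], c, rfl⟩)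
  exact ⟨⟨b, mem_infinitelyDivisible.2 fun n ↦ (hb n).2⟩, Subtype.ext (hb 0).1⟩

theorem exists_infinitelyDivisible_ne_zero [Infinite A]
    (htor : ∀ a : A, ∃ n : ℕ, p ^ n • a = 0) (hfin : {a : A | p • a = 0}.Finite) :
    ∃ d : infinitelyDivisible p A, d ≠ 0 ∧ p • d = 0 := by
  obtain ⟨b, hb⟩ := exists_forall_mem_of_antitone_of_finite
    (S := fun n ↦ {b : A | (b ≠ 0 ∧ p • b = 0) ∧ ∃ c, p ^ n • c = b})
    (fun _ _ h _ hb ↦ ⟨hb.1, exists_pow_nsmul_eq_of_le h hb.2⟩)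
    (hfin.subset fun _ hb ↦ hb.1.2) (by
      intro n
      obtain ⟨a, ha⟩ := (finite_setOf_pow_nsmul_eq_zero hfin n).exists_notMem
      obtain ⟨j, hj⟩ := exists_pow_nsmul_ne_zero_and_nsmul_eq_zero (htor (p ^ n • a)) ha
      exact ⟨p ^ j • p ^ n • a, hj, p ^ j • a, smul_comm _ _ _⟩)
  refine ⟨⟨b, mem_infinitelyDivisible.2 fun n ↦ (hb n).2⟩, ?_, Subtype.ext (hb 0).1.2⟩
  simpa [Subtype.ext_iff] using (hb 0).1.1

end Torsion

/-- A retract of an abelian group is a direct factor. -/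
def AddEquiv.prodKerOfLeftInverse {A P : Type*} [AddCommGroup A] [AddCommGroup P]
    (i : P →+ A) (r : A →+ P) (h : Function.LeftInverse r i) : A ≃+ P × r.ker where
  toFun a := (r a, ⟨a - i (r a), by simp [AddMonoidHom.mem_ker, h (r a)]⟩)
  invFun x := i x.1 + x.2
  left_inv a := by simp
  right_inv x := by
    have hx : r x.2 = 0 := x.2.2
    ext <;> simp [h x.1, hx]
  map_add' a b := by
    ext
    · simp
    · simp only [map_add, Prod.mk_add_mk, AddMemClass.mk_add_mk]
      abel

section Prufer

variable (p : ℕ) [Fact p.Prime]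

theorem Prufer.exists_pow_nsmul_eq_zero (x : Prufer p) : ∃ n : ℕ, p ^ n • x = 0 :=
  x.2.imp fun _ h ↦ Subtype.ext h

theorem Prufer.exists_nsmul_eq (x : Prufer p) : ∃ y, p • y = x := by
  have hp : (p : ℚ) ≠ 0 := Nat.cast_ne_zero.2 (Fact.out : p.Prime).ne_zero
  obtain ⟨x, k, hk⟩ := x
  obtain ⟨q, rfl⟩ := QuotientAddGroup.mk_surjective x
  have h : p • (QuotientAddGroup.mk (q / p) : ℚ ⧸ AddSubgroup.zmultiples (1 : ℚ)) =
      QuotientAddGroup.mk q := by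
    rw [← QuotientAddGroup.mk_nsmul, nsmul_eq_mul, mul_div_cancel₀ _ hp]
  refine ⟨⟨QuotientAddGroup.mk (q / p), k + 1, ?_⟩, Subtype.ext h⟩
  rw [pow_succ, mul_smul, h]
  exact hk

theorem Prufer.baer : Module.Baer ℤ (Prufer p) :=
  baer_of_torsion_of_nsmul_surjective Fact.out (exists_pow_nsmul_eq_zero p) (exists_nsmul_eq p)

/-- The `p`-torsion of the Prüfer group is cyclic of order `p`. -/
theorem Prufer.exists_injective_zmod : ∃ f : ZMod p →+ Prufer p, Function.Injective f ∧
    ∀ x : Prufer p, p • x = 0 → x ∈ f.range := by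
  have hp1 : p.Prime := Fact.out
  have hp : (p : ℚ) ≠ 0 := Nat.cast_ne_zero.2 hp1.ne_zero
  have h0 : p • (QuotientAddGroup.mk (1 / p : ℚ) : ℚ ⧸ AddSubgroup.zmultiples (1 : ℚ)) = 0 := by
    rw [← QuotientAddGroup.mk_nsmul, nsmul_eq_mul, mul_div_cancel₀ _ hp,
      QuotientAddGroup.eq_zero_iff]
    exact AddSubgroup.mem_zmultiples _
  let e : Prufer p := ⟨QuotientAddGroup.mk (1 / p : ℚ), 1, by rw [pow_one, h0]⟩
  have he : p • e = 0 := Subtype.ext h0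
  let f : ZMod p →+ Prufer p :=
    ZMod.lift p ⟨zmultiplesHom _ e, by simpa using he⟩
  have hf : ∀ n : ℤ, f n = n • e := fun n ↦ by simp [f]
  refine ⟨f, ?_, fun x hx ↦ ?_⟩
  · rw [injective_iff_map_eq_zero]
    intro z hz
    obtain ⟨n, rfl⟩ := ZMod.intCast_surjective z
    rw [hf] at hz
    have hz' : n • (QuotientAddGroup.mk (1 / p : ℚ) : ℚ ⧸ AddSubgroup.zmultiples (1 : ℚ)) = 0 :=
      congrArg Subtype.val hz
    rw [← QuotientAddGroup.mk_zsmul, QuotientAddGroup.eq_zero_iff,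
      AddSubgroup.mem_zmultiples_iff] at hz'
    obtain ⟨m, hm⟩ := hz'
    rw [ZMod.intCast_zmod_eq_zero_iff_dvd]
    refine ⟨m, ?_⟩
    simp only [zsmul_eq_mul, mul_one] at hm
    field_simp at hm
    rw [mul_comm]
    exact_mod_cast hm.symm
  · obtain ⟨x, k, hk⟩ := x
    obtain ⟨q, rfl⟩ := QuotientAddGroup.mk_surjective x
    have hx' : p • (QuotientAddGroup.mk q : ℚ ⧸ AddSubgroup.zmultiples (1 : ℚ)) = 0 :=
      congrArg Subtype.val hx
    rw [← QuotientAddGroup.mk_nsmul, QuotientAddGroup.eq_zero_iff,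
      AddSubgroup.mem_zmultiples_iff] at hx'
    obtain ⟨m, hm⟩ := hx'
    refine ⟨m, ?_⟩
    rw [hf]
    apply Subtype.ext
    change m • (QuotientAddGroup.mk (1 / p : ℚ) : ℚ ⧸ AddSubgroup.zmultiples (1 : ℚ)) = _
    rw [← QuotientAddGroup.mk_zsmul]
    congr 1
    simp only [zsmul_eq_mul, nsmul_eq_mul, mul_one] at hm ⊢
    rw [hm]
    field_simp

variable {p}

theorem Prufer.exists_injective {A : Type*} [AddCommGroup A] [Infinite A]
    (htor : ∀ a : A, ∃ n : ℕ, p ^ n • a = 0) (hfin : {a : A | p • a = 0}.Finite) :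
    ∃ i : Prufer p →+ A, Function.Injective i := by
  obtain ⟨d, hd, hpd⟩ := exists_infinitelyDivisible_ne_zero htor hfin
  obtain ⟨f, hf, hrange⟩ := Prufer.exists_injective_zmod p
  let g : ZMod p →+ infinitelyDivisible p A :=
    ZMod.lift p ⟨zmultiplesHom _ d, by simpa using hpd⟩
  have hg1 : g 1 = d := by
    have := ZMod.lift_coe p (⟨zmultiplesHom _ d, by simpa using hpd⟩ :
      {f : ℤ →+ infinitelyDivisible p A // f p = 0}) 1
    simpa using this
  have hg : ∀ z, g z = 0 → z = 0 := by
    intro z hz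
    by_contra h0
    apply hd
    rw [← hg1, ← inv_mul_cancel₀ h0, ← ZMod.natCast_zmod_val z⁻¹, ← nsmul_eq_mul, map_nsmul, hz,
      smul_zero]
  have hbaer := baer_of_torsion_of_nsmul_surjective (p := p) Fact.out
    (fun a : infinitelyDivisible p A ↦ (htor a).imp fun _ h ↦ Subtype.ext h)
    (exists_nsmul_eq_infinitelyDivisible hfin)
  obtain ⟨h, hh⟩ := hbaer.extension_property_addMonoidHom f hf g
  refine ⟨(infinitelyDivisible p A).subtype.comp h, (AddSubgroup.subtype_injective _).comp
    (injective_of_nsmul_eq_zero (Prufer.exists_pow_nsmul_eq_zero p) h fun x hx hhx ↦ ?_)⟩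
  obtain ⟨z, rfl⟩ := hrange x hx
  have : h (f z) = g z := DFunLike.congr_fun hh z
  rw [hg z (this ▸ hhx), map_zero]

end Prufer

/-- A finite `p`-group is a finite direct sum of nontrivial cyclic `p`-groups. -/
theorem exists_addEquiv_pi_zmod_of_finite {p : ℕ} (hp : p.Prime) (A : Type*) [AddCommGroup A]
    [Finite A] (htor : ∀ a : A, ∃ n : ℕ, p ^ n • a = 0) :
    ∃ (m : ℕ) (k : Fin m → ℕ), (∀ i, 1 ≤ k i) ∧ Nonempty (A ≃+ ∀ i : Fin m, ZMod (p ^ k i)) := by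
  classical
  obtain ⟨ι, _, n, hn, ⟨e⟩⟩ := AddCommGroup.equiv_directSum_zmod_of_finite' A
  have e' : A ≃+ ∀ i, ZMod (n i) := e.trans (DirectSum.addEquivProd _)
  have hk : ∀ i, ∃ k, 1 ≤ k ∧ n i = p ^ k := by
    intro i
    obtain ⟨N, hN⟩ := htor (e'.symm (Pi.single i 1))
    rw [← map_nsmul, map_eq_zero_iff _ e'.symm.injective] at hN
    have h1 := congrFun hN i
    simp only [Pi.smul_apply, Pi.single_eq_same, nsmul_eq_mul, mul_one, Pi.zero_apply] at h1
    obtain ⟨k, -, hk⟩ := (Nat.dvd_prime_pow hp).1 ((ZMod.natCast_eq_zero_iff _ _).1 h1)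
    refine ⟨k, Nat.one_le_iff_ne_zero.2 ?_, hk⟩
    rintro rfl
    exact (hn i).ne' (by simpa using hk)
  choose k hk1 hk using hk
  obtain rfl : n = fun i ↦ p ^ k i := funext hk
  let σ := (Fintype.equivFin ι).symm
  exact ⟨Fintype.card ι, fun j ↦ k (σ j), fun j ↦ hk1 _,
    ⟨e'.trans (RingEquiv.piCongrLeft (fun i ↦ ZMod (p ^ k i)) σ).toAddEquiv.symm⟩⟩

/-- Every p-torsion abelian group `A` with `{a | p • a = 0}` finite decomposes as
`A ≅ D ⊕ F` where `D` is a finite direct sum of Prüfer p-groups (a divisible group)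
and `F` is a finite p-group (a finite direct sum of cyclic p-groups). -/
theorem stmt_14 (p : ℕ) [Fact p.Prime] (A : Type) [AddCommGroup A]
    (htor : ∀ a : A, ∃ n : ℕ, (p ^ n : ℕ) • a = 0)
    (hfin : Finite {a : A // (p : ℕ) • a = 0}) :
    ∃ (r m : ℕ) (k : Fin m → ℕ), (∀ i, 1 ≤ k i) ∧
      Nonempty (A ≃+ ((Fin r → Prufer p) × ∀ i : Fin m, ZMod (p ^ k i))) := by
  induction hN : Nat.card {a : A // p • a = 0} using Nat.strong_induction_on generalizing A with
  | _ N ih =>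
  cases finite_or_infinite A
  · obtain ⟨m, k, hk, ⟨e⟩⟩ := exists_addEquiv_pi_zmod_of_finite Fact.out A htor
    exact ⟨0, m, k, hk, ⟨e.trans AddEquiv.uniqueProd.symm⟩⟩
  · obtain ⟨i, hi⟩ := Prufer.exists_injective htor (Set.finite_coe_iff.1 hfin)
    obtain ⟨r, hr⟩ := (Prufer.baer p).extension_property_addMonoidHom i hi (AddMonoidHom.id _)
    have hri : Function.LeftInverse r i := DFunLike.congr_fun hr
    let j : {b : r.ker // p • b = 0} → {a : A // p • a = 0} :=
      fun b ↦ ⟨b.1, congrArg Subtype.val b.2⟩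
    have hj : Function.Injective j := fun b c h ↦ by
      have hbc : (b.1 : A) = c.1 := congrArg (fun a ↦ a.1) h
      exact Subtype.ext (Subtype.ext hbc)
    obtain ⟨f, hf, -⟩ := Prufer.exists_injective_zmod p
    have hne : i (f 1) ≠ 0 := by
      rw [map_ne_zero_iff _ hi, map_ne_zero_iff _ hf]
      exact one_ne_zero
    have hpz : p • i (f 1) = 0 := by
      rw [← map_nsmul, ← map_nsmul, nsmul_one, ZMod.natCast_self, map_zero, map_zero]
    have hcard : Nat.card {b : r.ker // p • b = 0} < N := by
      have := Fintype.ofFinite {a : A // p • a = 0}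
      have := Fintype.ofInjective j hj
      rw [← hN, Nat.card_eq_fintype_card, Nat.card_eq_fintype_card]
      refine Fintype.card_lt_of_injective_of_notMem j hj (b := ⟨i (f 1), hpz⟩) ?_
      rintro ⟨⟨⟨b, hb⟩, _⟩, hbi⟩
      obtain rfl : b = i (f 1) := Subtype.ext_iff.1 hbi
      rw [AddMonoidHom.mem_ker, hri] at hb
      exact hne (by rw [hb, map_zero])
    obtain ⟨s, m, k, hk, ⟨e⟩⟩ := ih _ hcard r.ker
      (fun b ↦ (htor b).imp fun _ h ↦ Subtype.ext h) (Finite.of_injective j hj) rfl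
    refine ⟨s + 1, m, k, hk, ⟨(AddEquiv.prodKerOfLeftInverse i r hri).trans ?_⟩⟩
    exact ((AddEquiv.refl _).prodCongr e).trans (AddEquiv.prodAssoc.symm.trans
      ((Fin.consLinearEquiv ℤ fun _ ↦ Prufer p).toAddEquiv.prodCongr (AddEquiv.refl _)))
end
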